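/- arXiv:0811.4087 — 2 statements merged into one kernel-verified Lean document; each statement's English description precedes it below -/
import Mathlib

section
/- Let A be a Banach algebra with unit, H : ℝ → A continuous, and t ≥ 0. Then for every n ≥ 1: n · H_n(t) = Σ_{i=0}^{n−1} H_i(t) · H_{𝒟_{n−i}}(t), where H_{𝒟_m}(t) := Σ_{j=0}^{m−1} (−1)^j H_{D_{={1,…,j}}^{(m)}}(t) is the iterated integral evaluated on the Dynkin element 𝒟_m = Σ_{j=0}^{m−1} (−1)^j D_{={1,…,j}}^{(m)}. -/
open MeasureTheory

open Classical in
/-- The descent set of a permutation `σ ∈ S_n` (1-based convention):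
`Desc(σ) = {i ∈ {1,…,n−1} : σ(i) > σ(i+1)}`. -/
noncomputable def descSet {n : ℕ} (σ : Equiv.Perm (Fin n)) : Finset ℕ :=
  (Finset.Ioo 0 n).filter
    (fun i => ∃ h : i < n, σ ⟨i, h⟩ < σ ⟨i - 1, lt_of_le_of_lt (Nat.sub_le i 1) h⟩)

/-- The simplex `Δ_t^n = {0 ≤ t₁ ≤ ⋯ ≤ tₙ ≤ t}` inside `Fin n → ℝ`. -/
def simplex (n : ℕ) (t : ℝ) : Set (Fin n → ℝ) :=
  {u | (∀ i, 0 ≤ u i ∧ u i ≤ t) ∧ ∀ i j, i ≤ j → u i ≤ u j}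

variable {A : Type*} [NormedRing A] [NormedAlgebra ℝ A] [CompleteSpace A]

/-- The iterated integral `H_σ(t) = ∫_{Δ_t^n} H(t_{σ(1)})⋯H(t_{σ(n)}) dt₁⋯dtₙ`. -/
noncomputable def Hperm (H : ℝ → A) {n : ℕ} (σ : Equiv.Perm (Fin n)) (t : ℝ) : A :=
  ∫ u in simplex n t, (List.ofFn (fun j => H (u (σ j)))).prod

/-- `H_n(t) = ∫_{Δ_t^n} H(t₁)⋯H(tₙ) dt₁⋯dtₙ`, with `H_0(t) = 1`. -/
noncomputable def Hn (H : ℝ → A) : ℕ → ℝ → A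
  | 0, _ => 1
  | (n + 1), t => Hperm H (1 : Equiv.Perm (Fin (n + 1))) t

/-- The iterated integral evaluated on the Dynkin element:
`H_{𝒟_m}(t) = Σ_{j=0}^{m-1} (-1)^j H_{D_{={1,…,j}}^{(m)}}(t)`. -/
noncomputable def HDyn (H : ℝ → A) (m : ℕ) (t : ℝ) : A :=
  ∑ j ∈ Finset.range m, (-1 : ℝ) ^ j •
    ∑ σ ∈ Finset.univ.filter
        (fun σ : Equiv.Perm (Fin m) => descSet σ = Finset.Icc 1 j),
      Hperm H σ t


/-- The ordered product `H(v₁)⋯H(vₘ)`. -/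
def orderedProd (H : ℝ → A) {m : ℕ} (v : Fin m → ℝ) : A :=
  (List.ofFn fun j => H (v j)).prod

/-- Points of the cube `[0,t]^m` that descend strictly at the positions before `k`, ascend weakly
at the positions after `k`, and are unconstrained at `k`. -/
def hingeRegion (m k : ℕ) (t : ℝ) : Set (Fin m → ℝ) :=
  {v | (∀ i, 0 ≤ v i ∧ v i ≤ t) ∧
    ∀ i (h : i + 1 < m), i + 1 ≠ k → (v ⟨i + 1, h⟩ < v ⟨i, by omega⟩ ↔ i + 1 < k)}

/-- Points of the cube `[0,t]^m` whose descent set is exactly `{1,…,j}`. -/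
def valleyRegion (m j : ℕ) (t : ℝ) : Set (Fin m → ℝ) :=
  {v | (∀ i, 0 ≤ v i ∧ v i ≤ t) ∧
    ∀ i (h : i + 1 < m), (v ⟨i + 1, h⟩ < v ⟨i, by omega⟩ ↔ i < j)}

lemma measurableSet_valleyRegion (m j : ℕ) (t : ℝ) : MeasurableSet (valleyRegion m j t) := by
  refine Measurable.setOf (Measurable.and ?_ ?_)
  · refine Measurable.forall fun i => Measurable.and ?_ ?_
    · exact measurableSet_setOfPred.1 (measurableSet_le measurable_const (measurable_pi_apply i))
    · exact measurableSet_setOfPred.1 (measurableSet_le (measurable_pi_apply i) measurable_const)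
  · refine Measurable.forall fun i => Measurable.forall fun h => Measurable.iff ?_ measurable_const
    exact measurableSet_setOfPred.1 (measurableSet_lt (measurable_pi_apply _) (measurable_pi_apply _))

lemma measurableSet_simplex (m : ℕ) (t : ℝ) : MeasurableSet (simplex m t) := by
  refine Measurable.setOf (Measurable.and ?_ ?_)
  · refine Measurable.forall fun i => Measurable.and ?_ ?_
    · exact measurableSet_setOfPred.1 (measurableSet_le measurable_const (measurable_pi_apply i))
    · exact measurableSet_setOfPred.1 (measurableSet_le (measurable_pi_apply i) measurable_const)
  · refine Measurable.forall fun i => Measurable.forall fun j => Measurable.imp measurable_const ?_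
    exact measurableSet_setOfPred.1 (measurableSet_le (measurable_pi_apply _) (measurable_pi_apply _))

lemma continuous_orderedProd {B : Type*} [NormedRing B] {H : ℝ → B} (hH : Continuous H) (m : ℕ) :
    Continuous fun v : Fin m → ℝ => orderedProd H v := by
  simp only [orderedProd, List.ofFn_eq_map]
  exact continuous_list_prod _ fun i _ => by fun_prop

lemma integrableOn_orderedProd {B : Type*} [NormedRing B] {H : ℝ → B} (hH : Continuous H)
    {m : ℕ} {t : ℝ} {s : Set (Fin m → ℝ)} (hs : ∀ v ∈ s, ∀ i, 0 ≤ v i ∧ v i ≤ t) :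
    IntegrableOn (fun v : Fin m → ℝ => orderedProd H v) s :=
  ((continuous_orderedProd hH m).continuousOn.integrableOn_compact
    (isCompact_Icc (a := fun _ => 0) (b := fun _ => t))).mono_set
    fun v hv => ⟨fun i => (hs v hv i).1, fun i => (hs v hv i).2⟩

lemma simplex_eq_hingeRegion (m : ℕ) (t : ℝ) : simplex m t = hingeRegion m 0 t := by
  ext v
  refine and_congr_right fun _ => ⟨fun h i hi _ => ?_, fun h => ?_⟩
  · simpa using h ⟨i, by omega⟩ ⟨i + 1, hi⟩ (by simp)
  · cases m with
    | zero => exact fun i => i.elim0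
    | succ m =>
      have : Monotone v := Fin.monotone_iff_le_succ.2 fun i => by
        exact not_lt.1 fun hlt => absurd ((h i (by omega) (by omega)).1 hlt) (by omega)
      exact fun i j hij => this hij

lemma Hn_eq_setIntegral (H : ℝ → A) (n : ℕ) (t : ℝ) :
    Hn H n t = ∫ v in hingeRegion n 0 t, orderedProd H v := by
  cases n with
  | zero =>
    have : hingeRegion 0 0 t = Set.univ := by
      ext v; simp [hingeRegion]
    simp [Hn, this, orderedProd, integral_unique, Measure.volume_pi_eq_dirac (0 : Fin 0 → ℝ)]
  | succ n =>
    rw [← simplex_eq_hingeRegion]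
    rfl

/-- Concatenation of vectors is a measure-preserving measurable embedding. -/
lemma measurePreserving_append (k l : ℕ) :
    MeasurePreserving (fun p : (Fin k → ℝ) × (Fin l → ℝ) => Fin.append p.1 p.2) ∧
    MeasurableEmbedding (fun p : (Fin k → ℝ) × (Fin l → ℝ) => Fin.append p.1 p.2) := by
  have h : (fun p : (Fin k → ℝ) × (Fin l → ℝ) => Fin.append p.1 p.2) =
      ((MeasurableEquiv.sumPiEquivProdPi fun _ : Fin k ⊕ Fin l => ℝ).symm.trans
        (MeasurableEquiv.piCongrLeft (fun _ => ℝ) finSumFinEquiv)) := by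
    funext p i
    obtain ⟨i, rfl⟩ := finSumFinEquiv.surjective i
    rw [MeasurableEquiv.coe_trans, Function.comp_apply, MeasurableEquiv.coe_piCongrLeft,
      Equiv.piCongrLeft_apply_apply]
    cases i <;> simp [MeasurableEquiv.sumPiEquivProdPi]
  rw [h]
  refine ⟨?_, MeasurableEquiv.measurableEmbedding _⟩
  exact (volume_measurePreserving_piCongrLeft (fun _ => ℝ) finSumFinEquiv).comp
    (volume_measurePreserving_sumPiEquivProdPi_symm fun _ : Fin k ⊕ Fin l => ℝ)

lemma append_mem_hingeRegion_iff {k l : ℕ} {t : ℝ} (x : Fin k → ℝ) (y : Fin l → ℝ) :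
    Fin.append x y ∈ hingeRegion (k + l) k t ↔
      x ∈ hingeRegion k k t ∧ y ∈ hingeRegion l 0 t := by
  have hl (i : ℕ) (h : i < k) (h' : i < k + l) : Fin.append x y ⟨i, h'⟩ = x ⟨i, h⟩ :=
    Fin.append_left x y ⟨i, h⟩
  have hr (i : ℕ) (h : i < l) (h' : k + i < k + l) : Fin.append x y ⟨k + i, h'⟩ = y ⟨i, h⟩ :=
    Fin.append_right x y ⟨i, h⟩
  constructor
  · rintro ⟨h₁, h₂⟩
    refine ⟨⟨fun i => ?_, fun i hi hik => ?_⟩, ⟨fun i => ?_, fun i hi _ => ?_⟩⟩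
    · simpa using h₁ (Fin.castAdd l i)
    · have := h₂ i (by omega) hik
      rwa [hl (i + 1) hi, hl i (by omega)] at this
    · simpa using h₁ (Fin.natAdd k i)
    · have := h₂ (k + i) (by omega) (by omega)
      rw [hr i (by omega)] at this
      rw [show Fin.append x y ⟨k + i + 1, by omega⟩ = y ⟨i + 1, hi⟩ from hr (i + 1) hi _] at this
      rw [this]
      omega
  · rintro ⟨⟨h₁, h₂⟩, ⟨h₃, h₄⟩⟩
    refine ⟨fun i => ?_, fun i hi hik => ?_⟩
    · refine Fin.addCases (fun i => ?_) (fun i => ?_) i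
      · simpa using h₁ i
      · simpa using h₃ i
    · rcases lt_or_gt_of_ne hik with h | h
      · rw [hl (i + 1) h, hl i (by omega)]
        exact h₂ i h hik
      · obtain ⟨i, rfl⟩ := Nat.exists_eq_add_of_le (show k ≤ i by omega)
        rw [hr i (by omega),
          show Fin.append x y ⟨k + i + 1, hi⟩ = y ⟨i + 1, by omega⟩ from hr (i + 1) _ _,
          h₄ i (by omega) (by omega)]
        omega

lemma setIntegral_hingeRegion_mul {H : ℝ → A} (hH : Continuous H) (k l : ℕ) (t : ℝ) :
    (∫ v in hingeRegion k k t, orderedProd H v) * (∫ v in hingeRegion l 0 t, orderedProd H v) =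
      ∫ v in hingeRegion (k + l) k t, orderedProd H v := by
  obtain ⟨hp, he⟩ := measurePreserving_append k l
  rw [← hp.setIntegral_preimage_emb he]
  have hset : (fun p : (Fin k → ℝ) × (Fin l → ℝ) => Fin.append p.1 p.2) ⁻¹'
      hingeRegion (k + l) k t = hingeRegion k k t ×ˢ hingeRegion l 0 t := by
    ext p
    exact append_mem_hingeRegion_iff p.1 p.2
  have hfun (p : (Fin k → ℝ) × (Fin l → ℝ)) :
      orderedProd H (Fin.append p.1 p.2) = orderedProd H p.1 * orderedProd H p.2 := by
    simp only [orderedProd]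
    rw [← List.prod_append, ← List.ofFn_fin_append]
    congr 2
    funext i
    refine Fin.addCases (fun i => ?_) (fun i => ?_) i <;> simp
  simp_rw [hset, hfun]
  rw [Measure.volume_eq_prod, ← Measure.prod_restrict]
  exact (integral_prod_bilin (ContinuousLinearMap.mul ℝ A)
    (integrableOn_orderedProd hH fun v hv => hv.1)
    (integrableOn_orderedProd hH fun v hv => hv.1)).symm

lemma hingeRegion_zero (m : ℕ) (t : ℝ) : hingeRegion m 0 t = valleyRegion m 0 t := by
  ext v
  simp [hingeRegion, valleyRegion]

lemma hingeRegion_self (m : ℕ) (t : ℝ) :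
    hingeRegion (m + 1) (m + 1) t = valleyRegion (m + 1) m t := by
  ext v
  refine and_congr_right fun _ => forall₂_congr fun i hi => ?_
  simp [show i ≠ m by omega]

lemma setIntegral_hingeRegion_succ {H : ℝ → A} (hH : Continuous H) {m k : ℕ} (hk : k + 1 < m)
    (t : ℝ) :
    ∫ v in hingeRegion m (k + 1) t, orderedProd H v =
      (∫ v in valleyRegion m k t, orderedProd H v) +
        ∫ v in valleyRegion m (k + 1) t, orderedProd H v := by
  rw [← setIntegral_union _ (measurableSet_valleyRegion _ _ _)
    (integrableOn_orderedProd hH fun v hv => hv.1)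
    (integrableOn_orderedProd hH fun v hv => hv.1)]
  · congr 2
    ext v
    constructor
    · rintro ⟨h₁, h₂⟩
      by_cases h : v ⟨k + 1, hk⟩ < v ⟨k, by omega⟩
      · refine Or.inr ⟨h₁, fun i hi => ?_⟩
        by_cases hik : i = k
        · subst hik; simpa using h
        · rw [h₂ i hi (by omega)]; omega
      · refine Or.inl ⟨h₁, fun i hi => ?_⟩
        by_cases hik : i = k
        · subst hik; simpa using h
        · rw [h₂ i hi (by omega)]; omega
    · rintro (⟨h₁, h₂⟩ | ⟨h₁, h₂⟩) <;>
      · refine ⟨h₁, fun i hi hik => ?_⟩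
        rw [h₂ i hi]; omega
  · rw [Set.disjoint_left]
    rintro v ⟨_, h⟩ ⟨_, h'⟩
    have := (h k hk).1 ((h' k hk).2 (by omega))
    omega

lemma ae_injective (m : ℕ) : ∀ᵐ v : Fin m → ℝ, Function.Injective v := by
  have key (i j : Fin m) (hij : i ≠ j) : ∀ᵐ v : Fin m → ℝ, v i ≠ v j := by
    let S : Submodule ℝ (Fin m → ℝ) :=
      LinearMap.ker (LinearMap.proj (R := ℝ) (φ := fun _ => ℝ) i - LinearMap.proj j)
    have hS : S ≠ ⊤ := by
      intro h
      have : Pi.single i (1 : ℝ) ∈ S := h ▸ Submodule.mem_top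
      simp [S, hij.symm] at this
    have := Measure.addHaar_submodule volume S hS
    rw [ae_iff]
    convert this using 2
    ext v
    simp [S, sub_eq_zero]
  have h : ∀ᵐ v : Fin m → ℝ, ∀ i j : Fin m, i ≠ j → v i ≠ v j := by
    simp only [ae_all_iff]
    exact key
  filter_upwards [h] with v hv i j hij
  by_contra hne
  exact hv i j hne hij

lemma descSet_eq_Icc_iff {m j : ℕ} (hj : j < m) (σ : Equiv.Perm (Fin m)) :
    descSet σ = Finset.Icc 1 j ↔
      ∀ i (h : i + 1 < m), (σ ⟨i + 1, h⟩ < σ ⟨i, by omega⟩ ↔ i < j) := by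
  rw [Finset.ext_iff]
  simp only [descSet, Finset.mem_filter, Finset.mem_Ioo, Finset.mem_Icc]
  constructor
  · intro h i hi
    have := h (i + 1)
    simp only [Nat.add_sub_cancel] at this
    constructor
    · intro hlt
      have := this.1 ⟨⟨by omega, hi⟩, hi, hlt⟩
      omega
    · intro hij
      obtain ⟨_, _, hlt⟩ := this.2 ⟨by omega, by omega⟩
      exact hlt
  · intro h i
    constructor
    · rintro ⟨⟨h0, _⟩, hi, hlt⟩
      obtain ⟨i, rfl⟩ := Nat.exists_eq_add_of_le' h0
      have := (h i hi).1 hlt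
      omega
    · rintro ⟨h1, h2⟩
      obtain ⟨i, rfl⟩ := Nat.exists_eq_add_of_le' h1
      exact ⟨⟨by omega, by omega⟩, by omega, (h i (by omega)).2 (by omega)⟩

lemma Hperm_eq_setIntegral {B : Type*} [NormedRing B] [NormedAlgebra ℝ B] (H : ℝ → B) {m : ℕ}
    (σ : Equiv.Perm (Fin m)) (t : ℝ) :
    Hperm H σ t = ∫ v in {v | v ∘ σ.symm ∈ simplex m t}, orderedProd H v := by
  have hfun : ⇑(MeasurableEquiv.piCongrLeft (fun _ => ℝ) σ.symm) =
      fun u : Fin m → ℝ => u ∘ σ := by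
    funext u i
    obtain ⟨i, rfl⟩ := σ.symm.surjective i
    rw [MeasurableEquiv.coe_piCongrLeft, Equiv.piCongrLeft_apply_apply]
    simp
  have hp := volume_measurePreserving_piCongrLeft (fun _ : Fin m => ℝ) σ.symm
  have he := (MeasurableEquiv.piCongrLeft (fun _ : Fin m => ℝ) σ.symm).measurableEmbedding
  rw [hfun] at hp he
  rw [← hp.setIntegral_preimage_emb he]
  have hset : (fun u : Fin m → ℝ => u ∘ σ) ⁻¹' {v | v ∘ σ.symm ∈ simplex m t} = simplex m t := by
    ext u
    simp [Function.comp_assoc]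
  rw [hset]
  rfl

lemma sum_Hperm_eq_setIntegral {H : ℝ → A} (hH : Continuous H) {m j : ℕ} (hj : j < m) (t : ℝ) :
    ∑ σ ∈ Finset.univ.filter (fun σ : Equiv.Perm (Fin m) => descSet σ = Finset.Icc 1 j),
      Hperm H σ t = ∫ v in valleyRegion m j t, orderedProd H v := by
  obtain ⟨N, hNsub, hNmeas, hN⟩ :
      ∃ N ⊆ {v : Fin m → ℝ | Function.Injective v}, MeasurableSet N ∧ N =ᵐ[volume] Set.univ := by
    obtain ⟨N, hN, h1, h2⟩ := exists_measurable_superset_of_null (ae_iff.1 (ae_injective m))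
    refine ⟨Nᶜ, fun v hv => ?_, h1.compl, ?_⟩
    · by_contra h; exact hv (hN h)
    · simpa [Filter.eventuallyEq_univ, mem_ae_iff] using h2
  have hinter (s : Set (Fin m → ℝ)) : (s ∩ N : Set _) =ᵐ[volume] s := by
    simpa using (Filter.EventuallyEq.refl _ s).inter hN
  have hcube (σ : Equiv.Perm (Fin m)) (v : Fin m → ℝ) (hv : v ∘ σ.symm ∈ simplex m t) (i) :
      0 ≤ v i ∧ v i ≤ t := by
    simpa using hv.1 (σ i)
  -- on injective vectors, the sorting permutation preserves and reflects the order
  have hlt (σ : Equiv.Perm (Fin m)) (v : Fin m → ℝ) (hv : v ∘ σ.symm ∈ simplex m t)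
      (hinj : Function.Injective v) (a b : Fin m) : v a < v b ↔ σ a < σ b := by
    have hmono : StrictMono (v ∘ σ.symm) :=
      Monotone.strictMono_of_injective (fun i j hij => hv.2 i j hij)
        (hinj.comp σ.symm.injective)
    simpa using hmono.lt_iff_lt (a := σ a) (b := σ b)
  simp_rw [Hperm_eq_setIntegral]
  rw [← setIntegral_congr_set (hinter (valleyRegion m j t))]
  simp_rw [← setIntegral_congr_set (hinter {v : Fin m → ℝ | v ∘ Equiv.symm _ ∈ simplex m t})]
  rw [← integral_biUnion_finset]
  · congr 2
    ext v
    simp only [Set.mem_iUnion, Finset.mem_filter, Finset.mem_univ, true_and, exists_prop,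
      Set.mem_inter_iff, Set.mem_ofPred_eq]
    constructor
    · rintro ⟨σ, hσ, hv, hvN⟩
      refine ⟨⟨hcube σ v hv, fun i hi => ?_⟩, hvN⟩
      rw [hlt σ v hv (hNsub hvN)]
      exact (descSet_eq_Icc_iff hj σ).1 hσ i hi
    · rintro ⟨⟨h1, h2⟩, hvN⟩
      have hv : v ∘ (Tuple.sort v).symm.symm ∈ simplex m t :=
        ⟨fun i => h1 _, fun a b hab => Tuple.monotone_sort v hab⟩
      refine ⟨(Tuple.sort v).symm, ?_, hv, hvN⟩
      rw [descSet_eq_Icc_iff hj]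
      intro i hi
      rw [← hlt _ v hv (hNsub hvN)]
      exact h2 i hi
  · intro σ _
    refine MeasurableSet.inter ?_ hNmeas
    exact (measurableSet_simplex m t).preimage (by fun_prop)
  · intro σ _ τ _ hne
    refine Set.disjoint_left.2 fun v hσ hτ => hne ?_
    have h : StrictMono (τ ∘ σ.symm) := fun a b hab => by
      rw [Function.comp_apply, Function.comp_apply, ← hlt τ v hτ.1 (hNsub hτ.2),
        hlt σ v hσ.1 (hNsub hσ.2)]
      simpa using hab
    have h' : τ ∘ σ.symm = id := (StrictMono.range_inj h strictMono_id).1 (by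
      rw [(τ.surjective.comp σ.symm.surjective).range_eq, Set.range_id])
    ext i
    simpa using congrArg Fin.val (congrFun h' (σ i)).symm
  · exact fun σ _ => integrableOn_orderedProd hH fun v hv => hcube σ v hv.1

/-- The integral of `H(v₁)⋯H(vₖ)` over strictly decreasing vectors. -/
noncomputable def decreasingIntegral (H : ℝ → A) (k : ℕ) (t : ℝ) : A :=
  ∫ v in hingeRegion k k t, orderedProd H v

lemma decreasingIntegral_mul_Hn {H : ℝ → A} (hH : Continuous H) {k m : ℕ} (hk : k ≤ m) (t : ℝ) :
    decreasingIntegral H k t * Hn H (m - k) t =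
      ∫ v in hingeRegion m k t, orderedProd H v := by
  obtain ⟨l, rfl⟩ := Nat.exists_eq_add_of_le hk
  rw [Nat.add_sub_cancel_left, decreasingIntegral, Hn_eq_setIntegral,
    setIntegral_hingeRegion_mul hH]

/-- Alternating partial sums of the products of decreasing and increasing integrals telescope. -/
lemma sum_range_neg_one_pow_decreasingIntegral_mul_Hn {H : ℝ → A} (hH : Continuous H) {m : ℕ}
    (t : ℝ) {r : ℕ} (hr : r < m) :
    ∑ k ∈ Finset.range (r + 1), (-1 : ℝ) ^ k • (decreasingIntegral H k t * Hn H (m - k) t) =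
      (-1 : ℝ) ^ r • ∫ v in valleyRegion m r t, orderedProd H v := by
  induction r with
  | zero => simp [← hingeRegion_zero, ← decreasingIntegral_mul_Hn hH (Nat.zero_le m)]
  | succ r ih =>
    rw [Finset.sum_range_succ, ih (by omega), decreasingIntegral_mul_Hn hH hr.le,
      setIntegral_hingeRegion_succ hH hr, pow_succ]
    module

lemma sum_range_succ_neg_one_pow_decreasingIntegral_mul_Hn {H : ℝ → A} (hH : Continuous H)
    (m : ℕ) (t : ℝ) :
    ∑ k ∈ Finset.range (m + 1 + 1),
      (-1 : ℝ) ^ k • (decreasingIntegral H k t * Hn H (m + 1 - k) t) = 0 := by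
  rw [Finset.sum_range_succ, sum_range_neg_one_pow_decreasingIntegral_mul_Hn hH t (by omega),
    decreasingIntegral_mul_Hn hH le_rfl, hingeRegion_self, pow_succ]
  module

lemma sum_range_sum_range_succ {M : Type*} [AddCommMonoid M] (f : ℕ → M) (m : ℕ) :
    ∑ j ∈ Finset.range m, ∑ k ∈ Finset.range (j + 1), f k =
      ∑ k ∈ Finset.range (m + 1), (m - k) • f k := by
  induction m with
  | zero => simp
  | succ m ih =>
    rw [Finset.sum_range_succ, ih, ← Finset.sum_add_distrib,
      Finset.sum_range_succ _ (m + 1), Nat.sub_self, zero_smul, add_zero]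
    refine Finset.sum_congr rfl fun k hk => ?_
    rw [Nat.sub_add_comm (Finset.mem_range_succ_iff.1 hk), succ_nsmul]

lemma HDyn_eq_sum {H : ℝ → A} (hH : Continuous H) (m : ℕ) (t : ℝ) :
    HDyn H m t = ∑ k ∈ Finset.range (m + 1),
      ((-1 : ℝ) ^ k • decreasingIntegral H k t) * ((m - k) • Hn H (m - k) t) := by
  calc HDyn H m t = ∑ j ∈ Finset.range m, ∑ k ∈ Finset.range (j + 1),
        (-1 : ℝ) ^ k • (decreasingIntegral H k t * Hn H (m - k) t) :=
        Finset.sum_congr rfl fun j hj => by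
          have hj := Finset.mem_range.1 hj
          rw [sum_Hperm_eq_setIntegral hH hj,
            sum_range_neg_one_pow_decreasingIntegral_mul_Hn hH t hj]
    _ = _ := by
        rw [sum_range_sum_range_succ]
        refine Finset.sum_congr rfl fun k _ => ?_
        rw [mul_smul_comm, smul_mul_assoc]

/-- `n·H_n(t) = Σ_{i=0}^{n−1} H_i(t)·H_{𝒟_{n−i}}(t)`. -/
theorem nsmul_Hn_eq_sum_HDyn (H : ℝ → A) (hH : Continuous H) (t : ℝ) (ht : 0 ≤ t)
    (n : ℕ) (hn : 1 ≤ n) :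
    n • Hn H n t = ∑ i ∈ Finset.range n, Hn H i t * HDyn H (n - i) t := by
  let h : PowerSeries A := PowerSeries.mk fun k => Hn H k t
  let p : PowerSeries A := PowerSeries.mk fun k => (-1 : ℝ) ^ k • decreasingIntegral H k t
  let h' : PowerSeries A := PowerSeries.mk fun k => k • Hn H k t
  let d : PowerSeries A := PowerSeries.mk fun k => HDyn H k t
  have hph : p * h = 1 := by
    ext m
    rw [PowerSeries.coeff_mul, Finset.Nat.sum_antidiagonal_eq_sum_range_succ
      fun i j => PowerSeries.coeff i p * PowerSeries.coeff j h]
    simp only [p, h, PowerSeries.coeff_mk, smul_mul_assoc]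
    cases m with
    | zero => simp [Hn, decreasingIntegral, ← Hn_eq_setIntegral]
    | succ m =>
      rw [PowerSeries.coeff_one, if_neg (by omega)]
      exact sum_range_succ_neg_one_pow_decreasingIntegral_mul_Hn hH m t
  have hhp : h * p = 1 := by
    have hinv := PowerSeries.mul_invOfUnit h 1 (by simp [h, Hn])
    rwa [← left_inv_eq_right_inv hph hinv] at hinv
  have hd : d = p * h' := by
    ext m
    rw [PowerSeries.coeff_mul, Finset.Nat.sum_antidiagonal_eq_sum_range_succ
      fun i j => PowerSeries.coeff i p * PowerSeries.coeff j h']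
    simp only [p, h', d, PowerSeries.coeff_mk]
    exact HDyn_eq_sum hH m t
  have hmain : PowerSeries.coeff n h' = PowerSeries.coeff n (h * d) := by
    rw [hd, ← mul_assoc, hhp, one_mul]
  rw [PowerSeries.coeff_mul, Finset.Nat.sum_antidiagonal_eq_sum_range_succ
    fun i j => PowerSeries.coeff i h * PowerSeries.coeff j d, Finset.sum_range_succ] at hmain
  simpa [h, d, h', HDyn] using hmain
end

section
/- (Universal singular frame formula for the toy model.) Let A be a Banach algebra with unit, H : ℝ → A continuous, t ≥ 0 and λ ∈ ℝ. Set A_n^λ(t) := λ^n H_n(t) and β_n(t) := λ^n H_{𝒟_n}(t). Then for every n ≥ 1: A_n^λ(t) = Σ_{l ≤ n} Σ_{k_1+⋯+k_l = n, k_i > 0} β_{k_1}(t)·β_{k_2}(t)⋯β_{k_l}(t) / (k_1(k_1+k_2)⋯(k_1+⋯+k_l)), the inner sum being over all compositions (k_1,…,k_l) of n. -/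
open MeasureTheory

variable {A : Type*} [NormedRing A] [NormedAlgebra ℝ A] [CompleteSpace A]

/-- The descent positions of a finite sequence, 1-based as in `descSet`. -/
noncomputable def descents {α : Type*} [LT α] {n : ℕ} (v : Fin n → α) : Finset ℕ :=
  open Classical in (Finset.Ioo 0 n).filter
    (fun i => ∃ h : i < n, v ⟨i, h⟩ < v ⟨i - 1, lt_of_le_of_lt (Nat.sub_le i 1) h⟩)

theorem descSet_eq_descents {n : ℕ} (σ : Equiv.Perm (Fin n)) : descSet σ = descents σ := by
  ext i
  simp [descSet, descents]

theorem mem_descents {α : Type*} [LT α] {n : ℕ} {v : Fin n → α} {i : ℕ} :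
    i ∈ descents v ↔ 0 < i ∧ ∃ h : i < n, v ⟨i, h⟩ < v ⟨i - 1, lt_of_le_of_lt (Nat.sub_le i 1) h⟩ := by
  simp only [descents, Finset.mem_filter, Finset.mem_Ioo]
  constructor
  · rintro ⟨⟨h0, _⟩, h⟩
    exact ⟨h0, h⟩
  · rintro ⟨h0, hn, h⟩
    exact ⟨⟨h0, hn⟩, hn, h⟩

theorem descents_subset {α : Type*} [LT α] {n : ℕ} (v : Fin n → α) :
    descents v ⊆ Finset.Ioo 0 n := fun _ hi =>
  let ⟨h0, hn, _⟩ := mem_descents.1 hi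
  Finset.mem_Ioo.2 ⟨h0, hn⟩

theorem descents_eq_empty_iff {α : Type*} [LinearOrder α] {n : ℕ} {v : Fin n → α} :
    descents v = ∅ ↔ Monotone v := by
  rw [Finset.eq_empty_iff_forall_notMem]
  cases n with
  | zero => exact ⟨fun _ => Subsingleton.monotone v, fun _ i hi => by simp [mem_descents] at hi⟩
  | succ n =>
    rw [Fin.monotone_iff_le_succ]
    constructor
    · intro h i
      have := h (i + 1)
      simp only [mem_descents, not_and, not_exists, not_lt] at this
      exact this (Nat.succ_pos _) (by omega)
    · rintro h i hi
      obtain ⟨h0, hn, hlt⟩ := mem_descents.1 hi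
      obtain ⟨i, rfl⟩ := Nat.exists_eq_succ_of_ne_zero h0.ne'
      exact absurd hlt (not_lt.2 (h ⟨i, by omega⟩))

theorem descents_castAdd {α : Type*} [LT α] {m k : ℕ} (u : Fin (m + k) → α) :
    descents (fun i => u (Fin.castAdd k i)) = (descents u).filter (· < m) := by
  ext i
  simp only [mem_descents, Finset.mem_filter, Fin.castAdd_mk]
  constructor
  · rintro ⟨h0, h, hlt⟩
    exact ⟨⟨h0, by omega, hlt⟩, h⟩
  · rintro ⟨⟨h0, _, hlt⟩, h⟩
    exact ⟨h0, h, hlt⟩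

theorem descents_natAdd {α : Type*} [LT α] {m k : ℕ} (u : Fin (m + k) → α) :
    descents (fun i => u (Fin.natAdd m i)) =
      (Finset.Ioo 0 k).filter (fun i => m + i ∈ descents u) := by
  ext i
  simp only [mem_descents, Finset.mem_filter, Fin.natAdd_mk, Finset.mem_Ioo]
  constructor
  · rintro ⟨h0, h, hlt⟩
    refine ⟨⟨h0, h⟩, by omega, by omega, ?_⟩
    simpa only [Nat.add_sub_assoc h0] using hlt
  · rintro ⟨⟨h0, h⟩, _, _, hlt⟩
    refine ⟨h0, h, ?_⟩
    simpa only [Nat.add_sub_assoc h0] using hlt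

/-- A relabelling by a strictly increasing map does not change the descents. -/
theorem descents_comp_perm {α : Type*} [LinearOrder α] {n : ℕ} {v : Fin n → α}
    {σ : Equiv.Perm (Fin n)} (h : StrictMono (v ∘ σ.symm)) : descents v = descents σ := by
  ext i
  simp only [mem_descents]
  have key : ∀ a b, v a < v b ↔ σ a < σ b := fun a b => by
    simpa using h.lt_iff_lt (a := σ a) (b := σ b)
  simp only [key]

/-- The combination of indicators of `{1,…,j}` that defines the Dynkin element. -/
noncomputable def dynkinWeight (m : ℕ) (S : Finset ℕ) : ℝ :=
  ∑ j ∈ Finset.range m, if S = Finset.Icc 1 j then (-1 : ℝ) ^ j else 0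

/-- The part of `S` in the last `k` positions, shifted to start at `1`. -/
def shiftedTail (m k : ℕ) (S : Finset ℕ) : Finset ℕ :=
  (Finset.Ioo 0 k).filter (fun i => m + i ∈ S)

theorem dynkinWeight_empty {m : ℕ} (hm : 0 < m) : dynkinWeight m ∅ = 1 := by
  rw [dynkinWeight, Finset.sum_eq_single_of_mem 0 (by simpa using hm)]
  · simp
  · intro j _ hj
    rw [if_neg]
    intro h
    have : j ∈ Finset.Icc 1 j := by simp; omega
    simp [← h] at this

theorem dynkinWeight_of_one_notMem {m : ℕ} {S : Finset ℕ} (hS : S.Nonempty) (h1 : 1 ∉ S) :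
    dynkinWeight m S = 0 := by
  refine Finset.sum_eq_zero fun j _ => if_neg ?_
  rintro rfl
  rw [Finset.nonempty_Icc] at hS
  simp at h1
  omega

theorem dynkinWeight_shiftedTail_succ {m k : ℕ} {S : Finset ℕ} (hk : 0 < k) (h : m + 1 ∈ S) :
    dynkinWeight (k + 1) (shiftedTail m (k + 1) S) =
      -dynkinWeight k (shiftedTail (m + 1) k S) := by
  have h1 : 1 ∈ shiftedTail m (k + 1) S := by simp [shiftedTail, h, hk]
  rw [dynkinWeight, Finset.sum_range_succ', dynkinWeight, ← Finset.sum_neg_distrib, if_neg, add_zero]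
  · refine Finset.sum_congr rfl fun j hj => ?_
    have : shiftedTail m (k + 1) S = Finset.Icc 1 (j + 1) ↔
        shiftedTail (m + 1) k S = Finset.Icc 1 j := by
      simp only [Finset.ext_iff, shiftedTail, Finset.mem_filter, Finset.mem_Ioo, Finset.mem_Icc]
      constructor
      · intro H i
        have := H (i + 1)
        rw [show m + (i + 1) = m + 1 + i by ring] at this
        rcases Nat.eq_zero_or_pos i with rfl | hi
        · simp
        · grind
      · intro H i
        rcases i with _ | _ | i
        · simp
        · simp [h, hk]
        · have := H (i + 1)
          rw [show m + 1 + (i + 1) = m + (i + 1 + 1) by ring] at this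
          grind
    simp only [this]
    split_ifs <;> simp [pow_succ]
  · intro h
    simp [h] at h1

/-- The convolution identity `∑ₘ id_m ⋆ 𝒟_{n-m} = n · id_n`, read off descent sets. -/
theorem sum_dynkinWeight_shiftedTail {n : ℕ} {S : Finset ℕ} (hS : S ⊆ Finset.Ioo 0 n) :
    ∑ m ∈ Finset.range n, (if S.filter (· < m) = ∅ then (1 : ℝ) else 0) *
        dynkinWeight (n - m) (shiftedTail m (n - m) S) =
      n * if S = ∅ then 1 else 0 := by
  rcases S.eq_empty_or_nonempty with rfl | hne
  · rw [Finset.sum_congr rfl (g := fun _ => (1 : ℝ))]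
    · simp
    · intro m hm
      have : 0 < n - m := by simp at hm; omega
      simp [shiftedTail, dynkinWeight_empty this]
  · rw [if_neg hne.ne_empty, mul_zero]
    obtain ⟨d, hd⟩ : ∃ d, S.min' hne = d + 1 := by
      have := Finset.mem_Ioo.1 (hS (S.min'_mem hne))
      exact ⟨S.min' hne - 1, by omega⟩
    have hdS : d + 1 ∈ S := hd ▸ S.min'_mem hne
    have hmin : ∀ i ∈ S, d + 1 ≤ i := fun i hi => hd ▸ S.min'_le i hi
    have hdn : d + 1 < n := (Finset.mem_Ioo.1 (hS hdS)).2
    have hempty : ∀ m, S.filter (· < m) = ∅ ↔ m ≤ d + 1 := fun m => by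
      rw [Finset.filter_eq_empty_iff]
      exact ⟨fun h => not_lt.1 (h hdS), fun h i hi => not_lt.2 (h.trans (hmin i hi))⟩
    rw [← Finset.sum_subset (s₁ := {d, d + 1})]
    · rw [Finset.sum_pair (by omega), if_pos ((hempty _).2 (by omega)),
        if_pos ((hempty _).2 le_rfl)]
      obtain ⟨k, rfl⟩ : ∃ k, n = d + 1 + k := ⟨n - (d + 1), by omega⟩
      rw [show d + 1 + k - d = k + 1 by omega, show d + 1 + k - (d + 1) = k by omega,
        dynkinWeight_shiftedTail_succ (by omega) hdS]
      ring
    · intro m hm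
      simp only [Finset.mem_insert, Finset.mem_singleton] at hm
      simp only [Finset.mem_range]
      omega
    · intro m hm hm'
      simp only [Finset.mem_insert, Finset.mem_singleton] at hm'
      by_cases hmd : m ≤ d + 1
      · rw [dynkinWeight_of_one_notMem, mul_zero]
        · refine ⟨d + 1 - m, ?_⟩
          simp only [shiftedTail, Finset.mem_filter, Finset.mem_Ioo]
          rw [show m + (d + 1 - m) = d + 1 by omega]
          exact ⟨by omega, hdS⟩
        · intro h1
          have := hmin _ (Finset.mem_filter.1 h1).2
          omega
      · rw [if_neg (by rwa [hempty]), zero_mul]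

/-- The ordered product `H(v₁)⋯H(vₙ)`. -/
def wordProd {R : Type*} [Monoid R] (H : ℝ → R) {n : ℕ} (v : Fin n → ℝ) : R :=
  (List.ofFn (fun j => H (v j))).prod

theorem wordProd_add {R : Type*} [Monoid R] (H : ℝ → R) {m k : ℕ} (u : Fin (m + k) → ℝ) :
    wordProd H u = wordProd H (fun i => u (Fin.castAdd k i)) *
      wordProd H (fun i => u (Fin.natAdd m i)) := by
  simp only [wordProd, List.ofFn_add, List.prod_append]
  rfl

theorem continuous_wordProd {R : Type*} [Monoid R] [TopologicalSpace R] [ContinuousMul R]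
    {H : ℝ → R} (hH : Continuous H) (n : ℕ) :
    Continuous (fun v : Fin n → ℝ => wordProd H v) := by
  simp only [wordProd, List.ofFn_eq_map]
  exact continuous_list_prod _ fun i _ => hH.comp (continuous_apply i)

/-- Lebesgue measure on the cube `[0,t]^n`. -/
noncomputable def cubeMeasure (n : ℕ) (t : ℝ) : Measure (Fin n → ℝ) :=
  Measure.pi fun _ => volume.restrict (Set.Icc 0 t)

instance (n : ℕ) (t : ℝ) : IsFiniteMeasure (cubeMeasure n t) :=
  inferInstanceAs (IsFiniteMeasure (Measure.pi _))

theorem cubeMeasure_eq_restrict (n : ℕ) (t : ℝ) :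
    cubeMeasure n t = volume.restrict (Set.univ.pi fun _ => Set.Icc 0 t) := by
  rw [cubeMeasure, volume_pi, Measure.restrict_pi_pi]

theorem integrable_wordProd {R : Type*} [NormedRing R] {H : ℝ → R} (hH : Continuous H)
    (n : ℕ) (t : ℝ) :
    Integrable (fun v : Fin n → ℝ => wordProd H v) (cubeMeasure n t) := by
  rw [cubeMeasure_eq_restrict]
  exact (continuous_wordProd hH n).continuousOn.integrableOn_compact
    (isCompact_univ_pi fun _ => isCompact_Icc)

theorem measurable_comp_descents {n : ℕ} (w : Finset ℕ → ℝ) :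
    Measurable (fun v : Fin n → ℝ => w (descents v)) := by
  let _ : MeasurableSpace (Finset ℕ) := ⊤
  refine (measurable_from_top (f := w)).comp (measurable_to_countable' fun S => ?_)
  have : (descents (α := ℝ) (n := n)) ⁻¹' {S} = ⋂ i : ℕ, {v | i ∈ descents v ↔ i ∈ S} := by
    ext v
    simp [Finset.ext_iff]
  rw [this]
  refine MeasurableSet.iInter fun i => ?_
  refine MeasurableSet.iff ?_ (MeasurableSet.const _)
  simp only [mem_descents]
  refine (MeasurableSet.const _).inter ?_
  by_cases h : i < n
  · simp only [h, exists_true_left]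
    exact measurableSet_lt (measurable_pi_apply _) (measurable_pi_apply _)
  · simp only [h, IsEmpty.exists_iff]
    exact MeasurableSet.empty

theorem integrable_smul_wordProd {R : Type*} [NormedRing R] [NormedAlgebra ℝ R]
    {H : ℝ → R} (hH : Continuous H) {n : ℕ} (t : ℝ) (w : Finset ℕ → ℝ) :
    Integrable (fun v : Fin n → ℝ => w (descents v) • wordProd H v) (cubeMeasure n t) := by
  refine (integrable_wordProd hH n t).bdd_smul (∑ S ∈ (Finset.Ioo 0 n).powerset, ‖w S‖)
    (measurable_comp_descents w).aestronglyMeasurable (.of_forall fun v => ?_)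
  exact Finset.single_le_sum (f := fun S => ‖w S‖) (fun _ _ => norm_nonneg _)
    (Finset.mem_powerset.2 (descents_subset v))

/-- The iterated integral over `[0,t]^n` weighted by a function of the descent set. -/
noncomputable def descIntegral (H : ℝ → A) (t : ℝ) (n : ℕ) (w : Finset ℕ → ℝ) : A :=
  ∫ v : Fin n → ℝ, w (descents v) • wordProd H v ∂cubeMeasure n t

theorem integral_cubeMeasure_comp_perm {E : Type*} [NormedAddCommGroup E] [NormedSpace ℝ E]
    {n : ℕ} (t : ℝ) (σ : Equiv.Perm (Fin n)) (f : (Fin n → ℝ) → E) :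
    ∫ v, f (v ∘ σ.symm) ∂cubeMeasure n t = ∫ v, f v ∂cubeMeasure n t := by
  have := (measurePreserving_piCongrLeft (α := fun _ : Fin n => ℝ)
    (fun _ => volume.restrict (Set.Icc 0 t)) σ).integral_comp' f
  rw [cubeMeasure, ← this]
  congr 1 with v
  congr 1 with i
  obtain ⟨j, rfl⟩ := σ.surjective i
  rw [MeasurableEquiv.piCongrLeft_apply_apply, Function.comp_apply, Equiv.symm_apply_apply]

theorem integral_cubeMeasure_add {E : Type*} [NormedAddCommGroup E] [NormedSpace ℝ E]
    {m k : ℕ} (t : ℝ) (f : (Fin m → ℝ) × (Fin k → ℝ) → E) :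
    ∫ u : Fin (m + k) → ℝ, f (fun i => u (Fin.castAdd k i), fun i => u (Fin.natAdd m i))
        ∂cubeMeasure (m + k) t =
      ∫ p, f p ∂(cubeMeasure m t).prod (cubeMeasure k t) := by
  have h1 := (measurePreserving_piCongrLeft (α := fun _ : Fin m ⊕ Fin k => ℝ)
    (fun _ => volume.restrict (Set.Icc 0 t)) finSumFinEquiv.symm)
  have h2 := measurePreserving_sumPiEquivProdPi (X := fun _ : Fin m ⊕ Fin k => ℝ)
    (fun _ => volume.restrict (Set.Icc 0 t))
  have h3 := (h1.trans h2).integral_comp' f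
  rw [cubeMeasure, cubeMeasure, cubeMeasure, ← h3]
  have key : ∀ (u : Fin (m + k) → ℝ) (j : Fin (m + k)),
      MeasurableEquiv.piCongrLeft (fun _ => ℝ) finSumFinEquiv.symm u (finSumFinEquiv.symm j) =
        u j := fun u j => MeasurableEquiv.piCongrLeft_apply_apply _ _ _
  congr 1 with u
  refine congrArg f (Prod.ext (funext fun i => ?_) (funext fun i => ?_))
  · have := key u (Fin.castAdd k i)
    rw [finSumFinEquiv_symm_apply_castAdd] at this
    exact this.symm
  · have := key u (Fin.natAdd m i)
    rw [finSumFinEquiv_symm_apply_natAdd] at this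
    exact this.symm

theorem descIntegral_mul {H : ℝ → A} (hH : Continuous H) (t : ℝ) (m k : ℕ)
    (w w' : Finset ℕ → ℝ) :
    descIntegral H t m w * descIntegral H t k w' =
      descIntegral H t (m + k) fun S => w (S.filter (· < m)) * w' (shiftedTail m k S) := by
  have := integral_prod_bilin (ContinuousLinearMap.mul ℝ A)
    (integrable_smul_wordProd hH (n := m) t w) (integrable_smul_wordProd hH (n := k) t w')
  rw [ContinuousLinearMap.mul_apply'] at this
  rw [descIntegral, descIntegral, ← this, ← integral_cubeMeasure_add, descIntegral]
  congr 1 with u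
  simp only [ContinuousLinearMap.mul_apply', descents_castAdd, descents_natAdd, wordProd_add,
    smul_mul_smul_comm, shiftedTail]

theorem ae_injective_cubeMeasure (n : ℕ) (t : ℝ) :
    ∀ᵐ v ∂cubeMeasure n t, Function.Injective v := by
  rw [cubeMeasure_eq_restrict]
  refine ae_restrict_of_ae ?_
  have : ∀ i j : Fin n, ∀ᵐ v : Fin n → ℝ, i ≠ j → v i ≠ v j := fun i j => by
    by_cases hij : i = j
    · simp [hij]
    · have h0 := Measure.addHaar_submodule (volume : Measure (Fin n → ℝ))
        (LinearMap.ker (LinearMap.proj (R := ℝ) (φ := fun _ : Fin n => ℝ) i - LinearMap.proj j))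
        (fun h => by
          have : Pi.single i (1 : ℝ) ∈ (⊤ : Submodule ℝ (Fin n → ℝ)) := trivial
          rw [← h] at this
          simp [Ne.symm hij] at this)
      filter_upwards [measure_eq_zero_iff_ae_notMem.1 h0] with v hv _ h
      exact hv (by simp [h])
  filter_upwards [ae_all_iff.2 fun i => ae_all_iff.2 (this i)] with v hv i j h
  by_contra hij
  exact hv i j hij h

theorem measurableSet_monotone (n : ℕ) : MeasurableSet {u : Fin n → ℝ | Monotone u} := by
  simp only [Monotone, Set.ofPred_forall]
  exact .iInter fun i => .iInter fun j => .iInter fun _ =>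
    measurableSet_le (measurable_pi_apply _) (measurable_pi_apply _)

open Classical in
theorem Hperm_eq_integral_monotone {R : Type*} [NormedRing R] [NormedAlgebra ℝ R]
    (H : ℝ → R) {n : ℕ} (σ : Equiv.Perm (Fin n)) (t : ℝ) :
    Hperm H σ t = ∫ v : Fin n → ℝ, (if Monotone (v ∘ σ.symm) then (1 : ℝ) else 0) •
      wordProd H v ∂cubeMeasure n t := by
  have hset : simplex n t = {u | Monotone u} ∩ Set.univ.pi fun _ => Set.Icc 0 t := by
    ext u
    simp only [simplex, Set.mem_ofPred_eq, Set.mem_inter_iff, Set.mem_univ_pi, Set.mem_Icc]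
    exact and_comm
  have hmeas := measurableSet_monotone n
  rw [Hperm, hset, ← Measure.restrict_restrict hmeas, ← cubeMeasure_eq_restrict,
    ← integral_indicator hmeas, ← integral_cubeMeasure_comp_perm t σ]
  congr 1 with v
  simp [Set.indicator_apply, wordProd]

theorem sum_Hperm_eq_descIntegral {R : Type*} [NormedRing R] [NormedAlgebra ℝ R]
    {H : ℝ → R} (hH : Continuous H) (n : ℕ) (t : ℝ) (S : Finset ℕ) :
    ∑ σ ∈ Finset.univ.filter (fun σ : Equiv.Perm (Fin n) => descSet σ = S), Hperm H σ t =
      descIntegral H t n fun T => if T = S then 1 else 0 := by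
  classical
  simp only [Hperm_eq_integral_monotone, descIntegral]
  rw [← integral_finsetSum]
  · refine integral_congr_ae ?_
    filter_upwards [ae_injective_cubeMeasure n t] with v hv
    have hmono : ∀ σ : Equiv.Perm (Fin n), Monotone (v ∘ σ.symm) ↔ σ = (Tuple.sort v).symm := by
      intro σ
      constructor
      · intro h
        have := Tuple.unique_monotone h (Tuple.monotone_sort v)
        ext i
        have h' := congrFun this (σ i)
        have := hv h'
        rw [Equiv.symm_apply_apply] at this
        nth_rewrite 2 [this]
        simp
      · rintro rfl
        exact Tuple.monotone_sort v
    have hdesc : descents v = descents (Tuple.sort v).symm :=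
      descents_comp_perm ((Tuple.monotone_sort v).strictMono_of_injective
        (hv.comp (Equiv.injective _)))
    simp only [hmono, ← Finset.sum_smul, Finset.sum_ite_eq', Finset.mem_filter, Finset.mem_univ,
      true_and, descSet_eq_descents, hdesc]
  · intro σ _
    have hcomp : Measurable fun v : Fin n → ℝ => v ∘ σ.symm :=
      measurable_pi_lambda _ fun i => measurable_pi_apply (σ.symm i)
    have hmeas : MeasurableSet {v : Fin n → ℝ | Monotone (v ∘ σ.symm)} :=
      hcomp (measurableSet_monotone n)
    refine ((integrable_wordProd hH n t).indicator hmeas).congr (.of_forall fun v => ?_)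
    simp [Set.indicator_apply]

theorem Hn_eq_descIntegral (H : ℝ → A) (n : ℕ) (t : ℝ) :
    Hn H n t = descIntegral H t n fun T => if T = ∅ then 1 else 0 := by
  classical
  cases n with
  | zero =>
    have : IsProbabilityMeasure (cubeMeasure 0 t) := by
      rw [cubeMeasure, Measure.pi_of_empty]
      infer_instance
    simp [Hn, descIntegral, descents_eq_empty_iff, Subsingleton.monotone, wordProd]
  | succ n =>
    rw [Hn, Hperm_eq_integral_monotone, descIntegral]
    simp only [descents_eq_empty_iff]
    rfl

theorem HDyn_eq_descIntegral {R : Type*} [NormedRing R] [NormedAlgebra ℝ R]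
    {H : ℝ → R} (hH : Continuous H) (m : ℕ) (t : ℝ) :
    HDyn H m t = descIntegral H t m (dynkinWeight m) := by
  simp only [HDyn, sum_Hperm_eq_descIntegral hH, descIntegral, ← integral_smul]
  rw [← integral_finsetSum]
  · simp only [dynkinWeight, Finset.sum_smul, smul_smul, mul_ite, mul_one, mul_zero]
  · exact fun j _ => (integrable_smul_wordProd hH t fun T =>
      if T = Finset.Icc 1 j then 1 else 0).smul ((-1 : ℝ) ^ j)

/-- The recursion `n Hₙ = ∑ₘ Hₘ H_{𝒟_{n-m}}`. -/
theorem nsmul_Hn {H : ℝ → A} (hH : Continuous H) (n : ℕ) (t : ℝ) :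
    (n : ℝ) • Hn H n t = ∑ m ∈ Finset.range n, Hn H m t * HDyn H (n - m) t := by
  have hmul : ∀ m ∈ Finset.range n, Hn H m t * HDyn H (n - m) t =
      descIntegral H t n fun S => (if S.filter (· < m) = ∅ then (1 : ℝ) else 0) *
        dynkinWeight (n - m) (shiftedTail m (n - m) S) := by
    intro m hm
    rw [Hn_eq_descIntegral, HDyn_eq_descIntegral hH, descIntegral_mul hH,
      Nat.add_sub_cancel' (Finset.mem_range.1 hm).le]
  rw [Finset.sum_congr rfl hmul, Hn_eq_descIntegral]
  simp only [descIntegral]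
  rw [← integral_finsetSum, ← integral_smul]
  · simp only [smul_smul, ← Finset.sum_smul, sum_dynkinWeight_shiftedTail (descents_subset _)]
  · exact fun m _ => integrable_smul_wordProd hH t fun S =>
      (if S.filter (· < m) = ∅ then (1 : ℝ) else 0) *
        dynkinWeight (n - m) (shiftedTail m (n - m) S)

/-- A sum over the compositions of `n ≥ 1`, organised by the last block. -/
theorem Composition.sum_eq_sum_append_last {M : Type*} [AddCommMonoid M] {n : ℕ} (hn : 0 < n)
    (F : List ℕ → M) :
    ∑ c : Composition n, F c.blocks =
      ∑ m ∈ Finset.range n, ∑ c : Composition m, F (c.blocks ++ [n - m]) := by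
  rw [Finset.sum_sigma']
  symm
  refine Finset.sum_bij
    (fun p hp => ⟨p.2.blocks ++ [n - p.1], ?_, ?_⟩) ?_ ?_ ?_ ?_
  · intro i hi
    have hp' : p.1 < n := by simpa using hp
    rcases List.mem_append.1 hi with h | h
    · exact p.2.blocks_pos h
    · rw [List.mem_singleton.1 h]
      omega
  · have hp' : p.1 < n := by simpa using hp
    rw [List.sum_append, p.2.blocks_sum, List.sum_singleton]
    omega
  · exact fun _ _ => Finset.mem_univ _
  · intro p _ q _ h
    rw [Composition.sigma_eq_iff_blocks_eq]
    exact (List.append_inj' (congrArg Composition.blocks h) rfl).1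
  · intro c _
    have hne : c.blocks ≠ [] := fun h => hn.ne' (c.blocks_eq_nil.1 h)
    have happ := List.dropLast_append_getLast hne
    have hsum : c.blocks.dropLast.sum + c.blocks.getLast hne = n := by
      rw [← List.sum_singleton (x := c.blocks.getLast hne), ← List.sum_append, happ, c.blocks_sum]
    have hpos := c.blocks_pos (List.getLast_mem hne)
    refine ⟨⟨c.blocks.dropLast.sum, c.blocks.dropLast,
      fun hi => c.blocks_pos (List.mem_of_mem_dropLast hi), rfl⟩, ?_, ?_⟩
    · simp only [Finset.mem_sigma, Finset.mem_range, Finset.mem_univ, and_true]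
      omega
    · refine Composition.ext ?_
      have hlast : n - c.blocks.dropLast.sum = c.blocks.getLast hne := by omega
      simp only [hlast, happ]
  · exact fun _ _ => rfl

/-- The summand `b_{k₁}⋯b_{k_l} / (k₁(k₁+k₂)⋯(k₁+⋯+k_l))` attached to `(k₁,…,k_l)`. -/
noncomputable def singularFrameTerm {R : Type*} [Ring R] [Algebra ℝ R] (b : ℕ → R)
    (L : List ℕ) : R :=
  (∏ i ∈ Finset.range L.length, ((L.take (i + 1)).sum : ℝ))⁻¹ • (L.map b).prod

theorem singularFrameTerm_append_singleton {R : Type*} [Ring R] [Algebra ℝ R] (b : ℕ → R)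
    (L : List ℕ) (k : ℕ) :
    singularFrameTerm b (L ++ [k]) =
      ((L.sum + k : ℕ) : ℝ)⁻¹ • (singularFrameTerm b L * b k) := by
  have hprod : ∏ i ∈ Finset.range L.length, (((L ++ [k]).take (i + 1)).sum : ℝ) =
      ∏ i ∈ Finset.range L.length, ((L.take (i + 1)).sum : ℝ) :=
    Finset.prod_congr rfl fun i hi => by
      rw [List.take_append_of_le_length (Finset.mem_range.1 hi)]
  have hlast : (L ++ [k]).take (L.length + 1) = L ++ [k] :=
    List.take_of_length_le (by simp)
  simp only [singularFrameTerm, List.length_append, List.length_singleton, Finset.prod_range_succ,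
    hprod, hlast, List.map_append, List.prod_append, List.map_singleton, List.prod_singleton,
    List.sum_append, List.sum_singleton, mul_inv, smul_mul_assoc, smul_smul]
  rw [mul_comm]

/-- The recursion `n aₙ = ∑_{m<n} aₘ b_{n-m}` with `a₀ = 1` is solved by the sum over
compositions. -/
theorem eq_sum_singularFrameTerm {R : Type*} [Ring R] [Algebra ℝ R] {a b : ℕ → R}
    (h0 : a 0 = 1)
    (hrec : ∀ n : ℕ, (n : ℝ) • a n = ∑ m ∈ Finset.range n, a m * b (n - m)) (n : ℕ) :
    a n = ∑ c : Composition n, singularFrameTerm b c.blocks := by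
  induction n using Nat.strong_induction_on with
  | _ n ih =>
    rcases Nat.eq_zero_or_pos n with rfl | hn
    · have hnil : ∀ c : Composition 0, c.blocks = [] := fun c => c.blocks_eq_nil.2 rfl
      simp [h0, hnil, singularFrameTerm, composition_card]
    · have hn' : (n : ℝ) ≠ 0 := by exact_mod_cast hn.ne'
      rw [Composition.sum_eq_sum_append_last hn, ← inv_smul_smul₀ hn' (a n), hrec,
        Finset.smul_sum]
      refine Finset.sum_congr rfl fun m hm => ?_
      rw [ih m (Finset.mem_range.1 hm), Finset.sum_mul, Finset.smul_sum]
      refine Finset.sum_congr rfl fun c _ => ?_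
      rw [singularFrameTerm_append_singleton, c.blocks_sum,
        Nat.add_sub_cancel' (Finset.mem_range.1 hm).le]

/-- universal singular frame formula for the toy model: with
`A_n^λ(t) = λ^n H_n(t)` and `β_m(t) = λ^m H_{𝒟_m}(t)`, for every `n ≥ 1`,
`A_n^λ(t) = Σ_{k₁+⋯+k_l=n, k_i>0} β_{k₁}(t)⋯β_{k_l}(t)/(k₁(k₁+k₂)⋯(k₁+⋯+k_l))`,
the sum being over all compositions of `n`. -/
theorem toy_universal_singular_frame (H : ℝ → A) (hH : Continuous H)
    (t : ℝ) (ht : 0 ≤ t) (l : ℝ) (n : ℕ) (hn : 1 ≤ n) :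
    l ^ n • Hn H n t =
      ∑ c : Composition n,
        (∏ i ∈ Finset.range c.length, (c.sizeUpTo (i + 1) : ℝ))⁻¹ •
          (List.ofFn (fun i : Fin c.length =>
              l ^ c.blocksFun i • HDyn H (c.blocksFun i) t)).prod := by
  have hrec : ∀ n : ℕ, (n : ℝ) • (l ^ n • Hn H n t) =
      ∑ m ∈ Finset.range n, (l ^ m • Hn H m t) * (l ^ (n - m) • HDyn H (n - m) t) := by
    intro n
    rw [smul_comm, nsmul_Hn hH, Finset.smul_sum]
    refine Finset.sum_congr rfl fun m hm => ?_
    rw [smul_mul_smul_comm, ← pow_add, Nat.add_sub_cancel' (Finset.mem_range.1 hm).le]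
  rw [eq_sum_singularFrameTerm (a := fun n => l ^ n • Hn H n t)
    (b := fun k => l ^ k • HDyn H k t) (by simp [Hn]) hrec n]
  refine Finset.sum_congr rfl fun c _ => ?_
  rw [singularFrameTerm, ← c.ofFn_blocksFun, List.map_ofFn, c.ofFn_blocksFun]
  rfl
end
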